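/- For every pair (a_0, (a_t, a_{t-1}, …, a_1)) belonging to the inductively defined collection 𝒜, the leading number equals the continued fraction of the list: a_0 = [a_t, a_{t-1}, …, a_1]. -/

import Mathlib

/-- Continued fraction value of a list `(a_t, a_{t-1}, …, a_1)` (head is `a_t`):
`cf [] = 0`, `cf (a :: L) = 1/(a - cf L)` (total division of `ℚ`, `1/0 = 0`).
In particular `cf [a₁] = 1/a₁`. -/
def cf : List ℚ → ℚ
  | [] => 0
  | a :: L => 1 / (a - cf L)

/-- The inductively defined collection `𝒜` of pairs `(a₀, (a_t, …, a_1))`. -/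
inductive chainSet : ℚ → List ℚ → Prop
  | base : chainSet 1 [1]
  | grow (a₀ a : ℚ) (L : List ℚ) : chainSet a₀ (a :: L) →
      chainSet (a₀ + 1) (1 :: (a + 1) :: L)
  | split (a₀ b c : ℚ) (L₁ L₂ : List ℚ) : chainSet a₀ (L₁ ++ b :: c :: L₂) →
      chainSet a₀ (L₁ ++ (b + 1) :: 1 :: (c + 1) :: L₂)

/-!
Both rules rest on one identity: if `y = a - [L]` and `y, y + 1 ≠ 0`, then
`[1, a + 1, L] = 1 / (1 - 1 / (y + 1)) = 1 + 1 / y = [a, L] + 1`. Hence inserting a `1` between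
`b` and `c` and replacing `c` by `c + 1` raises the value to the right of `b` by one, which
replacing `b` by `b + 1` cancels. The rules preserve positivity of all denominators in the
continued fraction, so no division by zero ever interferes.
-/

theorem cf_grow {a : ℚ} {L : List ℚ} (ha : a ≠ cf L) (ha' : a + 1 ≠ cf L) :
    cf (1 :: (a + 1) :: L) = cf (a :: L) + 1 := by
  have hy : a - cf L ≠ 0 := sub_ne_zero.mpr ha
  have hy' : a + 1 - cf L ≠ 0 := sub_ne_zero.mpr ha'
  calc cf (1 :: (a + 1) :: L)
      = 1 / (1 - 1 / (a + 1 - cf L)) := rfl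
    _ = 1 / ((a - cf L) / (a + 1 - cf L)) := by
        congr 1
        field_simp
        ring
    _ = 1 / (a - cf L) + 1 := by
        field_simp
        ring

theorem cf_split {b c : ℚ} {L : List ℚ} (hc : c ≠ cf L) (hc' : c + 1 ≠ cf L) :
    cf ((b + 1) :: 1 :: (c + 1) :: L) = cf (b :: c :: L) :=
  calc cf ((b + 1) :: 1 :: (c + 1) :: L)
      = 1 / (b + 1 - cf (1 :: (c + 1) :: L)) := rfl
    _ = 1 / (b - cf (c :: L)) := by rw [cf_grow hc hc', add_sub_add_right_eq_sub]

theorem cf_append_congr {L M : List ℚ} (h : cf L = cf M) (P : List ℚ) :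
    cf (P ++ L) = cf (P ++ M) := by
  induction P with
  | nil => exact h
  | cons a P ih => simp only [List.cons_append, cf, ih]

/-- All denominators `a - cf L` met when evaluating the continued fraction of a list are positive;
on such lists `cf` never divides by zero. -/
def PosDenoms : List ℚ → Prop
  | [] => True
  | a :: L => cf L < a ∧ PosDenoms L

namespace PosDenoms

theorem of_append {P L : List ℚ} (h : PosDenoms (P ++ L)) : PosDenoms L := by
  induction P with
  | nil => exact h
  | cons a P ih => exact ih h.2

theorem append_congr {P L M : List ℚ} (h : PosDenoms (P ++ L)) (hcf : cf L = cf M)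
    (hM : PosDenoms M) : PosDenoms (P ++ M) := by
  induction P with
  | nil => exact hM
  | cons a P ih => exact ⟨cf_append_congr hcf P ▸ h.1, ih h.2⟩

theorem add_one_ne_cf {a : ℚ} {L : List ℚ} (h : PosDenoms (a :: L)) : a + 1 ≠ cf L :=
  (lt_add_of_lt_of_pos h.1 one_pos).ne'

theorem grow {a : ℚ} {L : List ℚ} (h : PosDenoms (a :: L)) :
    PosDenoms (1 :: (a + 1) :: L) := by
  obtain ⟨ha, hL⟩ := h
  have hlt : cf ((a + 1) :: L) < 1 := by
    rw [cf, div_lt_one] <;> linarith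
  exact ⟨hlt, lt_add_of_lt_of_pos ha one_pos, hL⟩

theorem split {b c : ℚ} {L : List ℚ} (h : PosDenoms (b :: c :: L)) :
    PosDenoms ((b + 1) :: 1 :: (c + 1) :: L) := by
  obtain ⟨hb, hc⟩ := h
  refine ⟨?_, hc.grow⟩
  rw [cf_grow hc.1.ne' hc.add_one_ne_cf]
  exact add_lt_add_left hb 1

theorem cf_append_split {P L : List ℚ} {b c : ℚ} (h : PosDenoms (P ++ b :: c :: L)) :
    cf (P ++ (b + 1) :: 1 :: (c + 1) :: L) = cf (P ++ b :: c :: L) :=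
  have hc : PosDenoms (c :: L) := h.of_append.2
  cf_append_congr (cf_split hc.1.ne' hc.add_one_ne_cf) P

theorem append_split {P L : List ℚ} {b c : ℚ} (h : PosDenoms (P ++ b :: c :: L)) :
    PosDenoms (P ++ (b + 1) :: 1 :: (c + 1) :: L) :=
  have hc : PosDenoms (c :: L) := h.of_append.2
  h.append_congr (cf_split hc.1.ne' hc.add_one_ne_cf).symm h.of_append.split

end PosDenoms

theorem chainSet.posDenoms {a₀ : ℚ} {L : List ℚ} (h : chainSet a₀ L) : PosDenoms L := by
  induction h with
  | base => exact ⟨one_pos, trivial⟩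
  | grow _ _ _ _ ih => exact ih.grow
  | split _ _ _ _ _ _ ih => exact ih.append_split

/-- For every `(a₀, (a_t, …, a_1)) ∈ 𝒜`, one has `a₀ = [a_t, a_{t-1}, …, a_1]`. -/
theorem chainSet_eq_cf (a₀ : ℚ) (L : List ℚ) (h : chainSet a₀ L) : a₀ = cf L := by
  induction h with
  | base => norm_num [cf]
  | grow a₀ a L hL ih =>
    have ha : PosDenoms (a :: L) := hL.posDenoms
    rw [ih, cf_grow ha.1.ne' ha.add_one_ne_cf]
  | split a₀ b c L₁ L₂ hL ih => exact ih.trans hL.posDenoms.cf_append_split.symm
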